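/- In the Monge chart, assume the origin is a normal singularity, i.e., r₁ + t₁ = 0 and r₂ + t₂ = 0. Then the coefficient B := E g_H − G e_H of du dv in the differential equation of principal mean curvature lines satisfies B(0,0) = 0, ∂B/∂u(0,0) = −[r₁(a₁ + b₁) + r₂(a₂ + b₂)] and ∂B/∂v(0,0) = −[r₁(c₁ + d₁) + r₂(c₂ + d₂)]. -/

import Mathlib

/-!
Both `E g_H - G e_H` and the mean curvature vector only see the normal coordinates of the second
derivatives of `α`. With `L_i = E ∂_v²h_i - G ∂_u²h_i` and
`M_i = G ∂_u²h_i - 2F ∂_u∂_v h_i + E ∂_v²h_i`, the coefficient is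
`B = k₁ M₁ L₁ + k₂ (x M₁ + y M₂) (x L₁ + y L₂)`, where `x`, `y` are the last two coordinates
of `B₂` and `k_i = 1 / (2 |B_i|² (EG - F²))` (`B_formula`). The norms enter only squared, so
everything is rational in the derivatives of the `h_i`.

At the origin the gradients vanish, so `E`, `F`, `G` agree with `1`, `0`, `1` to first order,
`k₁ = k₂ = 1/2`, `x = 0`, `y = 1`, and `M_i = r_i + t_i = 0` because the singularity is normal.
Hence `dB = (1/2) ∑ L_i dM_i` with `L_i = t_i - r_i = -2 r_i` and
`dM_i = d(∂_u²h_i) + d(∂_v²h_i)` (`hasFDerivAt_B`). Symmetry of the partial derivatives (`pdu_pdv`)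
identifies the entries of `dM_i` with `a_i + b_i` and `c_i + d_i`.
-/

noncomputable section

open scoped RealInnerProductSpace

abbrev E4 : Type := EuclideanSpace ℝ (Fin 4)

/-- Partial derivative with respect to the first variable `u`. -/
def pdu {X : Type*} [NormedAddCommGroup X] [NormedSpace ℝ X]
    (f : ℝ × ℝ → X) (p : ℝ × ℝ) : X := fderiv ℝ f p (1, 0)

/-- Partial derivative with respect to the second variable `v`. -/
def pdv {X : Type*} [NormedAddCommGroup X] [NormedSpace ℝ X]
    (f : ℝ × ℝ → X) (p : ℝ × ℝ) : X := fderiv ℝ f p (0, 1)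

/-- The wedge `x ∧ y ∧ z` of three vectors of `ℝ⁴`: the unique vector satisfying
`⟪x ∧ y ∧ z, w⟫ = det (x, y, z, w)` for all `w ∈ ℝ⁴`. -/
def wedge (x y z : E4) : E4 :=
  (WithLp.equiv 2 (Fin 4 → ℝ)).symm fun i =>
    Matrix.det (Matrix.of ![(x : Fin 4 → ℝ), y, z, fun j => if j = i then 1 else 0])

namespace Monge

/-- The immersion `α (u,v) = (u, v, h₁(u,v), h₂(u,v))` in the Monge chart. -/
def α (h₁ h₂ : ℝ × ℝ → ℝ) (p : ℝ × ℝ) : E4 :=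
  (WithLp.equiv 2 (Fin 4 → ℝ)).symm ![p.1, p.2, h₁ p, h₂ p]

def αu (h₁ h₂ : ℝ × ℝ → ℝ) : ℝ × ℝ → E4 := pdu (α h₁ h₂)
def αv (h₁ h₂ : ℝ × ℝ → ℝ) : ℝ × ℝ → E4 := pdv (α h₁ h₂)
def αuu (h₁ h₂ : ℝ × ℝ → ℝ) : ℝ × ℝ → E4 := pdu (αu h₁ h₂)
def αuv (h₁ h₂ : ℝ × ℝ → ℝ) : ℝ × ℝ → E4 := pdv (αu h₁ h₂)
def αvv (h₁ h₂ : ℝ × ℝ → ℝ) : ℝ × ℝ → E4 := pdv (αv h₁ h₂)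

/-- `B₁ = (−∂h₁/∂u, −∂h₁/∂v, 1, 0)`. -/
def B1 (h₁ : ℝ × ℝ → ℝ) (p : ℝ × ℝ) : E4 :=
  (WithLp.equiv 2 (Fin 4 → ℝ)).symm ![-(pdu h₁ p), -(pdv h₁ p), 1, 0]

/-- `B₂ = α_u ∧ α_v ∧ B₁`. -/
def B2 (h₁ h₂ : ℝ × ℝ → ℝ) (p : ℝ × ℝ) : E4 :=
  wedge (αu h₁ h₂ p) (αv h₁ h₂ p) (B1 h₁ p)

/-- `N₁ = B₁/|B₁|`. -/
def N1 (h₁ : ℝ × ℝ → ℝ) (p : ℝ × ℝ) : E4 := ‖B1 h₁ p‖⁻¹ • B1 h₁ p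

/-- `N₂ = B₂/|B₂|`. -/
def N2 (h₁ h₂ : ℝ × ℝ → ℝ) (p : ℝ × ℝ) : E4 := ‖B2 h₁ h₂ p‖⁻¹ • B2 h₁ h₂ p

/-- Coefficient `E` of the first fundamental form. -/
def Ec (h₁ h₂ : ℝ × ℝ → ℝ) (p : ℝ × ℝ) : ℝ := ⟪αu h₁ h₂ p, αu h₁ h₂ p⟫
/-- Coefficient `F` of the first fundamental form. -/
def Fc (h₁ h₂ : ℝ × ℝ → ℝ) (p : ℝ × ℝ) : ℝ := ⟪αu h₁ h₂ p, αv h₁ h₂ p⟫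
/-- Coefficient `G` of the first fundamental form. -/
def Gc (h₁ h₂ : ℝ × ℝ → ℝ) (p : ℝ × ℝ) : ℝ := ⟪αv h₁ h₂ p, αv h₁ h₂ p⟫

def e1 (h₁ h₂ : ℝ × ℝ → ℝ) (p : ℝ × ℝ) : ℝ := ⟪αuu h₁ h₂ p, N1 h₁ p⟫
def f1 (h₁ h₂ : ℝ × ℝ → ℝ) (p : ℝ × ℝ) : ℝ := ⟪αuv h₁ h₂ p, N1 h₁ p⟫
def g1 (h₁ h₂ : ℝ × ℝ → ℝ) (p : ℝ × ℝ) : ℝ := ⟪αvv h₁ h₂ p, N1 h₁ p⟫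
def e2 (h₁ h₂ : ℝ × ℝ → ℝ) (p : ℝ × ℝ) : ℝ := ⟪αuu h₁ h₂ p, N2 h₁ h₂ p⟫
def f2 (h₁ h₂ : ℝ × ℝ → ℝ) (p : ℝ × ℝ) : ℝ := ⟪αuv h₁ h₂ p, N2 h₁ h₂ p⟫
def g2 (h₁ h₂ : ℝ × ℝ → ℝ) (p : ℝ × ℝ) : ℝ := ⟪αvv h₁ h₂ p, N2 h₁ h₂ p⟫

/-- First component `H₁ = (G e₁ − 2F f₁ + E g₁)/(2(EG − F²))` of the mean curvature vector. -/
def Hc1 (h₁ h₂ : ℝ × ℝ → ℝ) (p : ℝ × ℝ) : ℝ :=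
  (Gc h₁ h₂ p * e1 h₁ h₂ p - 2 * Fc h₁ h₂ p * f1 h₁ h₂ p + Ec h₁ h₂ p * g1 h₁ h₂ p) /
    (2 * (Ec h₁ h₂ p * Gc h₁ h₂ p - Fc h₁ h₂ p ^ 2))

/-- Second component `H₂ = (G e₂ − 2F f₂ + E g₂)/(2(EG − F²))` of the mean curvature vector. -/
def Hc2 (h₁ h₂ : ℝ × ℝ → ℝ) (p : ℝ × ℝ) : ℝ :=
  (Gc h₁ h₂ p * e2 h₁ h₂ p - 2 * Fc h₁ h₂ p * f2 h₁ h₂ p + Ec h₁ h₂ p * g2 h₁ h₂ p) /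
    (2 * (Ec h₁ h₂ p * Gc h₁ h₂ p - Fc h₁ h₂ p ^ 2))

/-- The mean curvature vector `H = H₁N₁ + H₂N₂`. -/
def Hvec (h₁ h₂ : ℝ × ℝ → ℝ) (p : ℝ × ℝ) : E4 :=
  Hc1 h₁ h₂ p • N1 h₁ p + Hc2 h₁ h₂ p • N2 h₁ h₂ p

def eH (h₁ h₂ : ℝ × ℝ → ℝ) (p : ℝ × ℝ) : ℝ := ⟪αuu h₁ h₂ p, Hvec h₁ h₂ p⟫
def fH (h₁ h₂ : ℝ × ℝ → ℝ) (p : ℝ × ℝ) : ℝ := ⟪αuv h₁ h₂ p, Hvec h₁ h₂ p⟫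
def gH (h₁ h₂ : ℝ × ℝ → ℝ) (p : ℝ × ℝ) : ℝ := ⟪αvv h₁ h₂ p, Hvec h₁ h₂ p⟫

end Monge

/-- `r = ∂²h/∂u²(0,0)`. -/
def rr (h : ℝ × ℝ → ℝ) : ℝ := pdu (pdu h) (0, 0)
/-- `s = ∂²h/∂u∂v(0,0)`. -/
def ss (h : ℝ × ℝ → ℝ) : ℝ := pdv (pdu h) (0, 0)
/-- `t = ∂²h/∂v²(0,0)`. -/
def tt (h : ℝ × ℝ → ℝ) : ℝ := pdv (pdv h) (0, 0)
/-- `a = ∂³h/∂u³(0,0)`. -/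
def aa (h : ℝ × ℝ → ℝ) : ℝ := pdu (pdu (pdu h)) (0, 0)
/-- `d = ∂³h/∂u²∂v(0,0)`. -/
def dd (h : ℝ × ℝ → ℝ) : ℝ := pdv (pdu (pdu h)) (0, 0)
/-- `b = ∂³h/∂u∂v²(0,0)`. -/
def bb (h : ℝ × ℝ → ℝ) : ℝ := pdv (pdv (pdu h)) (0, 0)
/-- `c = ∂³h/∂v³(0,0)`. -/
def cc (h : ℝ × ℝ → ℝ) : ℝ := pdv (pdv (pdv h)) (0, 0)

open Monge

open scoped ContDiff

/-! ### Partial derivatives of smooth functions -/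

lemma contDiff_pdu {f : ℝ × ℝ → ℝ} (hf : ContDiff ℝ ∞ f) : ContDiff ℝ ∞ (pdu f) :=
  (hf.fderiv_right (m := ∞) le_rfl).clm_apply contDiff_const

lemma contDiff_pdv {f : ℝ × ℝ → ℝ} (hf : ContDiff ℝ ∞ f) : ContDiff ℝ ∞ (pdv f) :=
  (hf.fderiv_right (m := ∞) le_rfl).clm_apply contDiff_const

lemma pdu_pdv {f : ℝ × ℝ → ℝ} (hf : ContDiff ℝ ∞ f) : pdu (pdv f) = pdv (pdu f) := by
  funext p
  have hd : DifferentiableAt ℝ (fderiv ℝ f) p :=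
    ((hf.fderiv_right (m := ∞) le_rfl).differentiable (by simp)) p
  have hs : IsSymmSndFDerivAt ℝ f p :=
    hf.contDiffAt.isSymmSndFDerivAt (by
      rw [minSmoothness_of_isRCLikeNormedField]; exact ENat.LEInfty.out)
  have h1 : pdu (pdv f) p = fderiv ℝ (fderiv ℝ f) p (1, 0) (0, 1) := by
    change fderiv ℝ (fun q => fderiv ℝ f q (0, 1)) p (1, 0) = _
    rw [fderiv_clm_apply hd (by fun_prop)]; simp
  have h2 : pdv (pdu f) p = fderiv ℝ (fderiv ℝ f) p (0, 1) (1, 0) := by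
    change fderiv ℝ (fun q => fderiv ℝ f q (1, 0)) p (0, 1) = _
    rw [fderiv_clm_apply hd (by fun_prop)]; simp
  rw [h1, h2]
  exact hs (1, 0) (0, 1)

lemma fderiv_vec4 {f : Fin 4 → ℝ × ℝ → ℝ} (hf : ∀ i, Differentiable ℝ (f i)) (p w : ℝ × ℝ) :
    fderiv ℝ (fun q => (WithLp.toLp 2 ![f 0 q, f 1 q, f 2 q, f 3 q] : E4)) p w =
      WithLp.toLp 2 ![fderiv ℝ (f 0) p w, fderiv ℝ (f 1) p w, fderiv ℝ (f 2) p w,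
        fderiv ℝ (f 3) p w] := by
  have hd : HasFDerivAt (fun q => (WithLp.toLp 2 ![f 0 q, f 1 q, f 2 q, f 3 q] : E4))
      ((PiLp.continuousLinearEquiv 2 ℝ (fun _ : Fin 4 => ℝ)).symm.toContinuousLinearMap.comp
        (ContinuousLinearMap.pi fun i => fderiv ℝ (f i) p)) p := by
    rw [← hasFDerivWithinAt_univ, hasFDerivWithinAt_euclidean]
    intro i
    fin_cases i <;> exact (hf _ p).hasFDerivAt.hasFDerivWithinAt
  rw [hd.fderiv]
  ext i
  fin_cases i <;> rfl

namespace Monge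

/-! ### The Monge chart in coordinates -/

section

variable {h₁ h₂ : ℝ × ℝ → ℝ}

lemma αu_eq (H1 : ContDiff ℝ ∞ h₁) (H2 : ContDiff ℝ ∞ h₂) :
    αu h₁ h₂ = fun p => WithLp.toLp 2 ![1, 0, pdu h₁ p, pdu h₂ p] := by
  funext p
  have := fderiv_vec4 (f := ![Prod.fst, Prod.snd, h₁, h₂]) (by
    intro i
    fin_cases i
    exacts [differentiable_fst, differentiable_snd, H1.differentiable (by simp),
      H2.differentiable (by simp)]) p (1, 0)
  refine this.trans ?_
  simp [pdu, fderiv_fst, fderiv_snd]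

lemma αv_eq (H1 : ContDiff ℝ ∞ h₁) (H2 : ContDiff ℝ ∞ h₂) :
    αv h₁ h₂ = fun p => WithLp.toLp 2 ![0, 1, pdv h₁ p, pdv h₂ p] := by
  funext p
  have := fderiv_vec4 (f := ![Prod.fst, Prod.snd, h₁, h₂]) (by
    intro i
    fin_cases i
    exacts [differentiable_fst, differentiable_snd, H1.differentiable (by simp),
      H2.differentiable (by simp)]) p (0, 1)
  refine this.trans ?_
  simp [pdv, fderiv_fst, fderiv_snd]

lemma fderiv_const_vec4 {f g : ℝ × ℝ → ℝ} (hf : ContDiff ℝ ∞ f) (hg : ContDiff ℝ ∞ g)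
    (a b : ℝ) (p w : ℝ × ℝ) :
    fderiv ℝ (fun q => (WithLp.toLp 2 ![a, b, f q, g q] : E4)) p w =
      WithLp.toLp 2 ![0, 0, fderiv ℝ f p w, fderiv ℝ g p w] := by
  have := fderiv_vec4 (f := ![fun _ => a, fun _ => b, f, g]) (by
    intro i
    fin_cases i
    exacts [differentiable_const _, differentiable_const _, hf.differentiable (by simp),
      hg.differentiable (by simp)]) p w
  refine this.trans ?_
  simp

lemma αuu_eq (H1 : ContDiff ℝ ∞ h₁) (H2 : ContDiff ℝ ∞ h₂) (p : ℝ × ℝ) :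
    αuu h₁ h₂ p = WithLp.toLp 2 ![0, 0, pdu (pdu h₁) p, pdu (pdu h₂) p] := by
  rw [αuu, αu_eq H1 H2]
  exact fderiv_const_vec4 (contDiff_pdu H1) (contDiff_pdu H2) _ _ _ _

lemma αuv_eq (H1 : ContDiff ℝ ∞ h₁) (H2 : ContDiff ℝ ∞ h₂) (p : ℝ × ℝ) :
    αuv h₁ h₂ p = WithLp.toLp 2 ![0, 0, pdv (pdu h₁) p, pdv (pdu h₂) p] := by
  rw [αuv, αu_eq H1 H2]
  exact fderiv_const_vec4 (contDiff_pdu H1) (contDiff_pdu H2) _ _ _ _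

lemma αvv_eq (H1 : ContDiff ℝ ∞ h₁) (H2 : ContDiff ℝ ∞ h₂) (p : ℝ × ℝ) :
    αvv h₁ h₂ p = WithLp.toLp 2 ![0, 0, pdv (pdv h₁) p, pdv (pdv h₂) p] := by
  rw [αvv, αv_eq H1 H2]
  exact fderiv_const_vec4 (contDiff_pdv H1) (contDiff_pdv H2) _ _ _ _

/-- The wedge of `α_u`, `α_v`, `B₁`, where `a`, `c` stand for the first derivatives of `h₁` and
`b`, `d` for those of `h₂`. -/
lemma wedge_eq (a b c d : ℝ) :
    wedge (WithLp.toLp 2 ![1, 0, a, b]) (WithLp.toLp 2 ![0, 1, c, d])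
      (WithLp.toLp 2 ![-a, -c, 1, 0]) =
      WithLp.toLp 2 ![a * c * d - b - b * c ^ 2, a * b * c - d - a ^ 2 * d,
        -(a * b + c * d), 1 + a ^ 2 + c ^ 2] := by
  ext i
  fin_cases i <;>
    simp [wedge, Matrix.det_succ_row_zero, Fin.sum_univ_succ, Matrix.submatrix, Fin.succAbove] <;>
    ring

lemma inner_vec4 (x y : Fin 4 → ℝ) :
    ⟪(WithLp.toLp 2 x : E4), WithLp.toLp 2 y⟫ = x 0 * y 0 + x 1 * y 1 + x 2 * y 2 + x 3 * y 3 := by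
  simp [PiLp.inner_apply, Fin.sum_univ_four]
  ring

lemma Ec_eq (H1 : ContDiff ℝ ∞ h₁) (H2 : ContDiff ℝ ∞ h₂) (p : ℝ × ℝ) :
    Ec h₁ h₂ p = 1 + pdu h₁ p ^ 2 + pdu h₂ p ^ 2 := by
  simp only [Ec, αu_eq H1 H2, inner_vec4]; simp; ring

lemma Fc_eq (H1 : ContDiff ℝ ∞ h₁) (H2 : ContDiff ℝ ∞ h₂) (p : ℝ × ℝ) :
    Fc h₁ h₂ p = pdu h₁ p * pdv h₁ p + pdu h₂ p * pdv h₂ p := by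
  simp [Fc, αu_eq H1 H2, αv_eq H1 H2, inner_vec4]

lemma Gc_eq (H1 : ContDiff ℝ ∞ h₁) (H2 : ContDiff ℝ ∞ h₂) (p : ℝ × ℝ) :
    Gc h₁ h₂ p = 1 + pdv h₁ p ^ 2 + pdv h₂ p ^ 2 := by
  simp only [Gc, αv_eq H1 H2, inner_vec4]; simp; ring

lemma B2_eq (H1 : ContDiff ℝ ∞ h₁) (H2 : ContDiff ℝ ∞ h₂) (p : ℝ × ℝ) :
    B2 h₁ h₂ p = WithLp.toLp 2
      ![pdu h₁ p * pdv h₁ p * pdv h₂ p - pdu h₂ p - pdu h₂ p * pdv h₁ p ^ 2,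
        pdu h₁ p * pdu h₂ p * pdv h₁ p - pdv h₂ p - pdu h₁ p ^ 2 * pdv h₂ p,
        -(pdu h₁ p * pdu h₂ p + pdv h₁ p * pdv h₂ p), 1 + pdu h₁ p ^ 2 + pdv h₁ p ^ 2] := by
  rw [B2, αu_eq H1 H2, αv_eq H1 H2]
  exact wedge_eq _ _ _ _

/-! ### The coefficient as a rational expression in the derivatives -/

/-- The third coordinate of `B₂`. -/
def xc (h₁ h₂ : ℝ × ℝ → ℝ) (p : ℝ × ℝ) : ℝ := -(pdu h₁ p * pdu h₂ p + pdv h₁ p * pdv h₂ p)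

/-- The fourth coordinate of `B₂`, which is also `|B₁|²`. -/
def yc (h₁ : ℝ × ℝ → ℝ) (p : ℝ × ℝ) : ℝ := 1 + pdu h₁ p ^ 2 + pdv h₁ p ^ 2

/-- `|B₂|²` as a polynomial in the first derivatives of `h₁` and `h₂`. -/
def nB2 (h₁ h₂ : ℝ × ℝ → ℝ) (p : ℝ × ℝ) : ℝ :=
  (pdu h₁ p * pdv h₁ p * pdv h₂ p - pdu h₂ p - pdu h₂ p * pdv h₁ p ^ 2) ^ 2 +
    (pdu h₁ p * pdu h₂ p * pdv h₁ p - pdv h₂ p - pdu h₁ p ^ 2 * pdv h₂ p) ^ 2 +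
    xc h₁ h₂ p ^ 2 + yc h₁ p ^ 2

/-- `G h_uu - 2F h_uv + E h_vv`, with `E`, `F`, `G` those of the surface of `h₁`, `h₂`. -/
def Mc (h₁ h₂ h : ℝ × ℝ → ℝ) (p : ℝ × ℝ) : ℝ :=
  Gc h₁ h₂ p * pdu (pdu h) p - 2 * Fc h₁ h₂ p * pdv (pdu h) p + Ec h₁ h₂ p * pdv (pdv h) p

/-- `E h_vv - G h_uu`, with `E`, `G` those of the surface of `h₁`, `h₂`. -/
def Lc (h₁ h₂ h : ℝ × ℝ → ℝ) (p : ℝ × ℝ) : ℝ :=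
  Ec h₁ h₂ p * pdv (pdv h) p - Gc h₁ h₂ p * pdu (pdu h) p

/-- `2 (EG - F²)`. -/
def Dc (h₁ h₂ : ℝ × ℝ → ℝ) (p : ℝ × ℝ) : ℝ :=
  2 * (Ec h₁ h₂ p * Gc h₁ h₂ p - Fc h₁ h₂ p ^ 2)

lemma norm_B1_sq (p : ℝ × ℝ) : ‖B1 h₁ p‖ ^ 2 = yc h₁ p := by
  simp [EuclideanSpace.norm_sq_eq, B1, Fin.sum_univ_four, yc]; ring

lemma norm_B2_sq (H1 : ContDiff ℝ ∞ h₁) (H2 : ContDiff ℝ ∞ h₂) (p : ℝ × ℝ) :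
    ‖B2 h₁ h₂ p‖ ^ 2 = nB2 h₁ h₂ p := by
  rw [B2_eq H1 H2]
  simp [EuclideanSpace.norm_sq_eq, Fin.sum_univ_four, nB2, xc, yc]

lemma inner_N1 (x y : ℝ) (p : ℝ × ℝ) :
    ⟪(WithLp.toLp 2 ![0, 0, x, y] : E4), N1 h₁ p⟫ = ‖B1 h₁ p‖⁻¹ * x := by
  rw [N1, real_inner_smul_right]
  congr 1
  refine (inner_vec4 _ _).trans ?_
  simp

lemma inner_N2 (H1 : ContDiff ℝ ∞ h₁) (H2 : ContDiff ℝ ∞ h₂) (x y : ℝ) (p : ℝ × ℝ) :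
    ⟪(WithLp.toLp 2 ![0, 0, x, y] : E4), N2 h₁ h₂ p⟫ =
      ‖B2 h₁ h₂ p‖⁻¹ * (xc h₁ h₂ p * x + yc h₁ p * y) := by
  rw [N2, real_inner_smul_right]
  congr 1
  rw [B2_eq H1 H2, inner_vec4]
  simp [xc, yc]
  ring

/-- The square roots in the unit normals cancel: each `N_i` occurs twice in `E g_H - G e_H`, once
in `H_i` and once in the pairing with `H`. -/
lemma B_formula (H1 : ContDiff ℝ ∞ h₁) (H2 : ContDiff ℝ ∞ h₂) (p : ℝ × ℝ) :
    Ec h₁ h₂ p * gH h₁ h₂ p - Gc h₁ h₂ p * eH h₁ h₂ p =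
      Mc h₁ h₂ h₁ p * (Lc h₁ h₂ h₁ p * ((yc h₁ p)⁻¹ * (Dc h₁ h₂ p)⁻¹)) +
      (xc h₁ h₂ p * Mc h₁ h₂ h₁ p + yc h₁ p * Mc h₁ h₂ h₂ p) *
        ((xc h₁ h₂ p * Lc h₁ h₂ h₁ p + yc h₁ p * Lc h₁ h₂ h₂ p) *
          ((nB2 h₁ h₂ p)⁻¹ * (Dc h₁ h₂ p)⁻¹)) := by
  have hy : (yc h₁ p)⁻¹ = ‖B1 h₁ p‖⁻¹ ^ 2 := by rw [← norm_B1_sq, inv_pow]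
  have hn : (nB2 h₁ h₂ p)⁻¹ = ‖B2 h₁ h₂ p‖⁻¹ ^ 2 := by rw [← norm_B2_sq H1 H2, inv_pow]
  rw [hy, hn]
  simp only [gH, eH, Hvec, inner_add_right, real_inner_smul_right, Hc1, Hc2, e1, f1, g1, e2, f2,
    g2, αuu_eq H1 H2, αuv_eq H1 H2, αvv_eq H1 H2, inner_N1, inner_N2 H1 H2, Mc, Lc, Dc,
    div_eq_mul_inv]
  ring

/-! ### The derivative at a normal singularity -/

/-- A product of a function vanishing at `z` with a differentiable function has only one term in
its derivative. -/
lemma hasFDerivAt_mul_of_zero {f g : ℝ × ℝ → ℝ} {f' : ℝ × ℝ →L[ℝ] ℝ} {z : ℝ × ℝ}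
    (hf : HasFDerivAt f f' z) (hz : f z = 0) (hg : DifferentiableAt ℝ g z) :
    HasFDerivAt (fun p => f p * g p) (g z • f') z := by
  refine (hf.mul hg.hasFDerivAt).congr_fderiv ?_
  simp [hz]

/-- Where all first derivatives vanish, the first fundamental form is stationary, so only the second
derivatives of `h` contribute to the derivative of `Mc h₁ h₂ h`. -/
lemma hasFDerivAt_Mc (H1 : ContDiff ℝ ∞ h₁) (H2 : ContDiff ℝ ∞ h₂) {h : ℝ × ℝ → ℝ}
    (H : ContDiff ℝ ∞ h) {z : ℝ × ℝ} (hu1 : pdu h₁ z = 0) (hv1 : pdv h₁ z = 0)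
    (hu2 : pdu h₂ z = 0) (hv2 : pdv h₂ z = 0) :
    HasFDerivAt (Mc h₁ h₂ h) (fderiv ℝ (pdu (pdu h)) z + fderiv ℝ (pdv (pdv h)) z) z := by
  have d {f : ℝ × ℝ → ℝ} (hf : ContDiff ℝ ∞ f) : HasFDerivAt f (fderiv ℝ f z) z :=
    (hf.differentiable (by simp) z).hasFDerivAt
  have du1 := d (contDiff_pdu H1)
  have dv1 := d (contDiff_pdv H1)
  have du2 := d (contDiff_pdu H2)
  have dv2 := d (contDiff_pdv H2)
  have dE : HasFDerivAt (Ec h₁ h₂) (0 : ℝ × ℝ →L[ℝ] ℝ) z := by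
    rw [funext (Ec_eq H1 H2)]
    refine (((du1.pow 2).const_add 1).add (du2.pow 2)).congr_fderiv ?_
    simp [hu1, hu2]
  have dG : HasFDerivAt (Gc h₁ h₂) (0 : ℝ × ℝ →L[ℝ] ℝ) z := by
    rw [funext (Gc_eq H1 H2)]
    refine (((dv1.pow 2).const_add 1).add (dv2.pow 2)).congr_fderiv ?_
    simp [hv1, hv2]
  have dF : HasFDerivAt (Fc h₁ h₂) (0 : ℝ × ℝ →L[ℝ] ℝ) z := by
    rw [funext (Fc_eq H1 H2)]
    refine ((du1.mul dv1).add (du2.mul dv2)).congr_fderiv ?_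
    simp [hu1, hu2, hv1, hv2]
  refine (((dG.mul (d (contDiff_pdu (contDiff_pdu H)))).sub
    ((dF.const_mul 2).mul (d (contDiff_pdv (contDiff_pdu H))))).add
    (dE.mul (d (contDiff_pdv (contDiff_pdv H))))).congr_fderiv ?_
  simp [Ec_eq H1 H2, Fc_eq H1 H2, Gc_eq H1 H2, hu1, hu2, hv1, hv2]

/-- The derivative of `E g_H - G e_H` at a point where the gradients of the `h_i` vanish and which
is a normal singularity. -/
lemma hasFDerivAt_B (H1 : ContDiff ℝ ∞ h₁) (H2 : ContDiff ℝ ∞ h₂) {z : ℝ × ℝ}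
    (hu1 : pdu h₁ z = 0) (hv1 : pdv h₁ z = 0) (hu2 : pdu h₂ z = 0) (hv2 : pdv h₂ z = 0)
    (hn1 : pdu (pdu h₁) z + pdv (pdv h₁) z = 0) (hn2 : pdu (pdu h₂) z + pdv (pdv h₂) z = 0) :
    HasFDerivAt (fun p => Ec h₁ h₂ p * gH h₁ h₂ p - Gc h₁ h₂ p * eH h₁ h₂ p)
      (-(pdu (pdu h₁) z • (fderiv ℝ (pdu (pdu h₁)) z + fderiv ℝ (pdv (pdv h₁)) z) +
        pdu (pdu h₂) z • (fderiv ℝ (pdu (pdu h₂)) z + fderiv ℝ (pdv (pdv h₂)) z))) z := by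
  have s {f : ℝ × ℝ → ℝ} (hf : ContDiff ℝ ∞ f) : DifferentiableAt ℝ f z :=
    hf.differentiable (by simp) z
  have su1 := s (contDiff_pdu H1)
  have sv1 := s (contDiff_pdv H1)
  have su2 := s (contDiff_pdu H2)
  have sv2 := s (contDiff_pdv H2)
  have suu1 := s (contDiff_pdu (contDiff_pdu H1))
  have svv1 := s (contDiff_pdv (contDiff_pdv H1))
  have suu2 := s (contDiff_pdu (contDiff_pdu H2))
  have svv2 := s (contDiff_pdv (contDiff_pdv H2))
  have hE : Ec h₁ h₂ z = 1 := by simp [Ec_eq H1 H2, hu1, hu2]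
  have hF : Fc h₁ h₂ z = 0 := by simp [Fc_eq H1 H2, hu1, hu2]
  have hG : Gc h₁ h₂ z = 1 := by simp [Gc_eq H1 H2, hv1, hv2]
  have hD : Dc h₁ h₂ z = 2 := by simp [Dc, hE, hF, hG]
  have hx : xc h₁ h₂ z = 0 := by simp [xc, hu1, hv1]
  have hy : yc h₁ z = 1 := by simp [yc, hu1, hv1]
  have hn : nB2 h₁ h₂ z = 1 := by simp [nB2, hx, hy, hu1, hv1, hu2, hv2]
  have hM1 : Mc h₁ h₂ h₁ z = 0 := by simp [Mc, hE, hF, hG, hn1]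
  have hM2 : Mc h₁ h₂ h₂ z = 0 := by simp [Mc, hE, hF, hG, hn2]
  have hL1 : Lc h₁ h₂ h₁ z = -2 * pdu (pdu h₁) z := by
    simp only [Lc, hE, hG]; linarith
  have hL2 : Lc h₁ h₂ h₂ z = -2 * pdu (pdu h₂) z := by
    simp only [Lc, hE, hG]; linarith
  have dE : DifferentiableAt ℝ (Ec h₁ h₂) z := by rw [funext (Ec_eq H1 H2)]; fun_prop
  have dF : DifferentiableAt ℝ (Fc h₁ h₂) z := by rw [funext (Fc_eq H1 H2)]; fun_prop
  have dG : DifferentiableAt ℝ (Gc h₁ h₂) z := by rw [funext (Gc_eq H1 H2)]; fun_prop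
  have dD : DifferentiableAt ℝ (Dc h₁ h₂) z := by unfold Dc; fun_prop
  have dx : DifferentiableAt ℝ (xc h₁ h₂) z := by unfold xc; fun_prop
  have dy : DifferentiableAt ℝ (yc h₁) z := by unfold yc; fun_prop
  have dn : DifferentiableAt ℝ (nB2 h₁ h₂) z := by unfold nB2; fun_prop
  have dL1 : DifferentiableAt ℝ (Lc h₁ h₂ h₁) z := by unfold Lc; fun_prop
  have dL2 : DifferentiableAt ℝ (Lc h₁ h₂ h₂) z := by unfold Lc; fun_prop
  have dDi := dD.inv (by rw [hD]; norm_num)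
  have dyi := dy.inv (by rw [hy]; norm_num)
  have dni := dn.inv (by rw [hn]; norm_num)
  have m1 := hasFDerivAt_Mc H1 H2 H1 hu1 hv1 hu2 hv2
  have m2 := hasFDerivAt_Mc H1 H2 H2 hu1 hv1 hu2 hv2
  rw [funext (B_formula H1 H2)]
  refine ((hasFDerivAt_mul_of_zero m1 hM1 (dL1.mul (dyi.mul dDi))).add
    (hasFDerivAt_mul_of_zero ((dx.hasFDerivAt.mul m1).add (dy.hasFDerivAt.mul m2))
      (by simp [hM1, hM2])
      (((dx.mul dL1).add (dy.mul dL2)).mul (dni.mul dDi)))).congr_fderiv ?_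
  ext <;> simp [hx, hy, hn, hD, hM1, hM2, hL1, hL2] <;> ring

end

end Monge

/-- at a normal singularity, the coefficient `B = E g_H − G e_H` of `du dv`
in the differential equation of principal mean curvature lines vanishes at the origin and
has the stated first derivatives. -/
theorem stmt5
    (h₁ h₂ : ℝ × ℝ → ℝ)
    (h₁smooth : ContDiff ℝ (⊤ : ℕ∞) h₁) (h₂smooth : ContDiff ℝ (⊤ : ℕ∞) h₂)
    (h₁zero : h₁ (0, 0) = 0) (h₂zero : h₂ (0, 0) = 0)
    (h₁grad : fderiv ℝ h₁ (0, 0) = 0) (h₂grad : fderiv ℝ h₂ (0, 0) = 0)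
    (hns₁ : rr h₁ + tt h₁ = 0) (hns₂ : rr h₂ + tt h₂ = 0) :
    (fun p => Ec h₁ h₂ p * gH h₁ h₂ p - Gc h₁ h₂ p * eH h₁ h₂ p) (0, 0) = 0 ∧
    pdu (fun p => Ec h₁ h₂ p * gH h₁ h₂ p - Gc h₁ h₂ p * eH h₁ h₂ p) (0, 0) =
      -(rr h₁ * (aa h₁ + bb h₁) + rr h₂ * (aa h₂ + bb h₂)) ∧
    pdv (fun p => Ec h₁ h₂ p * gH h₁ h₂ p - Gc h₁ h₂ p * eH h₁ h₂ p) (0, 0) =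
      -(rr h₁ * (cc h₁ + dd h₁) + rr h₂ * (cc h₂ + dd h₂)) := by
  have hu1 : pdu h₁ (0, 0) = 0 := by simp [pdu, h₁grad]
  have hv1 : pdv h₁ (0, 0) = 0 := by simp [pdv, h₁grad]
  have hu2 : pdu h₂ (0, 0) = 0 := by simp [pdu, h₂grad]
  have hv2 : pdv h₂ (0, 0) = 0 := by simp [pdv, h₂grad]
  have hB := (hasFDerivAt_B h₁smooth h₂smooth hu1 hv1 hu2 hv2 hns₁ hns₂).fderiv
  -- `bb` is defined with the `u`-derivative innermost, but here it arises outermost.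
  have hb {h : ℝ × ℝ → ℝ} (H : ContDiff ℝ ∞ h) : pdu (pdv (pdv h)) = pdv (pdv (pdu h)) := by
    rw [pdu_pdv (contDiff_pdv H), pdu_pdv H]
  have hb₁ : fderiv ℝ (pdv (pdv h₁)) (0, 0) (1, 0) = bb h₁ := congrFun (hb h₁smooth) _
  have hb₂ : fderiv ℝ (pdv (pdv h₂)) (0, 0) (1, 0) = bb h₂ := congrFun (hb h₂smooth) _
  refine ⟨?_, ?_, ?_⟩
  · have hM {h : ℝ × ℝ → ℝ} (hn : rr h + tt h = 0) : Mc h₁ h₂ h (0, 0) = 0 := by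
      rw [rr, tt] at hn
      simp [Mc, Ec_eq h₁smooth h₂smooth, Fc_eq h₁smooth h₂smooth, Gc_eq h₁smooth h₂smooth,
        hu1, hv1, hu2, hv2, hn]
    beta_reduce
    rw [B_formula h₁smooth h₂smooth, hM hns₁, hM hns₂]
    simp
  · rw [pdu, hB]
    simp only [neg_apply, add_apply, smul_apply, smul_eq_mul, hb₁, hb₂]
    rfl
  · rw [pdv, hB]
    simp only [neg_apply, add_apply, smul_apply, smul_eq_mul, rr, cc, dd, pdv]
    ring
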